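/- There exist absolute constants c > 0 and C > 0 with the following property. Let 0 < ε < 1/2, B > 1, and let N be a positive integer; set r := c·B·√(log(1/ε)) and L := r·√(2·log(1/ε)), and assume 1 < B < r < L < N/2. Then for every w ∈ ℤ whose residue modulo N, taken in (−N/2, N/2], has absolute value greater than N/B, one has |Σ_{l∈ℤ, |l|≤L} G_{L,r,l}·exp(2πi·w·l/N)| ≤ C·ε. -/

import Mathlib

open MeasureTheory Real
open scoped ENNReal NNReal

noncomputable section

/-- The half-open unit cube `[0,1)^d`. -/
def unitCube (d : ℕ) : Set (Fin d → ℝ) := Set.univ.pi fun _ => Set.Ico (0 : ℝ) 1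

/-- `INT f = ∫_{[0,1]^d} f(x) dx`. -/
def INT {d : ℕ} (f : (Fin d → ℝ) → ℂ) : ℂ := ∫ x in unitCube d, f x

/-- The character `x ↦ e^{2πi w·x}`. -/
def eWX {d : ℕ} (w : Fin d → ℤ) (x : Fin d → ℝ) : ℂ :=
  Complex.exp (2 * (Real.pi : ℂ) * Complex.I * ∑ j, (w j : ℂ) * (x j : ℂ))

/-- Fourier coefficient `f̂(w) = ∫_{[0,1]^d} f(x) e^{-2πi w·x} dx`. -/
def fCoeff {d : ℕ} (f : (Fin d → ℝ) → ℂ) (w : Fin d → ℤ) : ℂ :=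
  ∫ x in unitCube d,
    f x * Complex.exp (-(2 * (Real.pi : ℂ)) * Complex.I * ∑ j, (w j : ℂ) * (x j : ℂ))

/-- Truncated periodized Gaussian window `G_{L,r,l}`. -/
def Gwin (N : ℕ) (r L : ℝ) (l : ℤ) : ℝ :=
  ∑' k : ℤ, if |(l : ℝ) + k * N| ≤ L then
      (r * Real.sqrt (2 * Real.pi))⁻¹ * Real.exp (-((l : ℝ) + k * N) ^ 2 / (2 * r ^ 2))
    else 0

/-- Fully periodized (untruncated) Gaussian window `G_{r,l}`. -/
def Gfull (N : ℕ) (r : ℝ) (l : ℤ) : ℝ :=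
  ∑' k : ℤ, (r * Real.sqrt (2 * Real.pi))⁻¹ * Real.exp (-((l : ℝ) + k * N) ^ 2 / (2 * r ^ 2))

/-- Sample space for the random shifts `η = (η_u)_{u ∈ ℤ_N^d}`. -/
abbrev ηSpace (N d : ℕ) := (Fin d → ZMod N) → Fin d → ℝ

/-- The random sample point `{(z - lH)/N} + η_{u(l)}`, where `u(l) = (z - lH) mod N`. -/
def samplePt (N : ℕ) {d : ℕ} (H z : Fin d → ℤ) (η : ηSpace N d) (l : ℤ) : Fin d → ℝ :=
  fun j => Int.fract (((z j - l * H j : ℤ) : ℝ) / N)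
      + η (fun i => ((z i - l * H i : ℤ) : ZMod N)) j

/-- The randomized estimator `I(f_{N,η})_{H,L,r,z}`. -/
def estim (N : ℕ) {d : ℕ} (L r : ℝ) (f : (Fin d → ℝ) → ℂ)
    (H z : Fin d → ℤ) (η : ηSpace N d) : ℂ :=
  ∑' l : ℤ, if |(l : ℝ)| ≤ L then f (samplePt N H z η l) * ((Gwin N r L l : ℝ) : ℂ) else 0

/-- Uniform probability measure on a finite type. -/
def unifFin (α : Type*) [MeasurableSpace α] [Fintype α] : Measure α :=
  (Fintype.card α : ℝ≥0∞)⁻¹ • Measure.count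

/-- Uniform distribution on `[0, 1/N)`. -/
def cellUniform (N : ℕ) : Measure ℝ := (N : ℝ≥0∞) • volume.restrict (Set.Ico (0 : ℝ) (1 / N))

/-- The distribution of `η`: i.i.d. uniform on `[0,1/N)^d`. -/
def ηMeas (N d : ℕ) [NeZero N] : Measure (ηSpace N d) :=
  Measure.pi fun _ => Measure.pi fun _ => cellUniform N

/-- Sample space for `H` (uniform on `ℤ^d ∩ [1,N)^d`), encoded via `Fin (N-1)`. -/
abbrev Hspace (N d : ℕ) := Fin d → Fin (N - 1)

/-- Sample space for `z` (uniform on `ℤ^d ∩ [0,N)^d`). -/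
abbrev Zspace (N d : ℕ) := Fin d → Fin N

/-- Decoding of `H`: values in `ℤ ∩ [1,N)`. -/
def hDec {N d : ℕ} (H : Hspace N d) : Fin d → ℤ := fun j => (H j : ℤ) + 1

/-- Decoding of `z`: values in `ℤ ∩ [0,N)`. -/
def zDec {N d : ℕ} (z : Zspace N d) : Fin d → ℤ := fun j => (z j : ℤ)

/-- Full sample space of the algorithm: `(H, z, η)`. -/
abbrev Ωspace (N d : ℕ) := Hspace N d × Zspace N d × ηSpace N d

/-- Joint distribution of the independent random inputs `(H, z, η)`. -/
def μΩ (N d : ℕ) [NeZero N] : Measure (Ωspace N d) :=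
  (unifFin (Hspace N d)).prod ((unifFin (Zspace N d)).prod (ηMeas N d))

/-- The estimator as a function of the random input `ω = (H, z, η)`. -/
def estimRV (N : ℕ) {d : ℕ} (L r : ℝ) (f : (Fin d → ℝ) → ℂ) (ω : Ωspace N d) : ℂ :=
  estim N L r f (hDec ω.1) (zDec ω.2.1) ω.2.2

/-- Median of a finite family of reals (middle order statistic for odd size). -/
def medianReal {t : ℕ} (v : Fin t → ℝ) : ℝ :=
  ((Finset.univ.val.map v).sort (· ≤ ·)).getD ((t - 1) / 2) 0

/-- Median of complex numbers: medians of real and imaginary parts. -/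
def medianC {t : ℕ} (v : Fin t → ℂ) : ℂ :=
  ⟨medianReal fun j => (v j).re, medianReal fun j => (v j).im⟩

/-- Grid point `u/N ∈ [0,1)^d` attached to `u ∈ ℤ_N^d`. -/
def gridPt {N d : ℕ} (u : Fin d → ZMod N) : Fin d → ℝ := fun j => ((u j).val : ℝ) / N

/-- The representative of `w` modulo `N` lying in `(-N/2, N/2]`. -/
def bres (N : ℕ) (w : ℤ) : ℤ := w - N * ⌈(w : ℚ) / (N : ℚ) - 1 / 2⌉

/-- The weight `(1 + (Σ_j 2π|w_j|)^s)²` of the isotropic Sobolev norm. -/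
def sobWeight {d : ℕ} (s : ℝ) (w : Fin d → ℤ) : ℝ :=
  (1 + (∑ j, 2 * Real.pi * |(w j : ℝ)|) ^ s) ^ 2

/-- Squared isotropic Sobolev norm `‖f‖²_{H^s(𝕋^d)}` (as a sum over frequencies). -/
def sobNormSq {d : ℕ} (s : ℝ) (f : (Fin d → ℝ) → ℂ) : ℝ :=
  ∑' w : Fin d → ℤ, sobWeight s w * ‖fCoeff f w‖ ^ 2

/-- The Korobov weight `Γ_{γ,s}(w) = γ_{supp w}^s ∏_j max(1,|w_j|^s)`. -/
def korWeight {d : ℕ} (γ : Finset (Fin d) → ℝ) (s : ℝ) (w : Fin d → ℤ) : ℝ :=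
  (γ (Finset.univ.filter fun j => w j ≠ 0)) ^ s * ∏ j, max 1 (|(w j : ℝ)| ^ s)

end

/-!
By Poisson summation, a full Gaussian sum of width `r` at the frequency `β = w / N` is
`∑ n, exp (-2 (π r)² (n + β)²)`; it only sees `β` modulo `1`, and it is of size `exp (-(π r β)²)`
when `β` is the balanced representative. Since `|l| ≤ L < N / 2`, only the term `k = 0` of the
periodization survives, so the window differs from the full Gaussian by its two tails beyond `±L`.
There `exp (-l² / (2 r²)) ≤ exp (-L² / (2 r²)) exp (-(l ∓ L)² / (2 r²))`, and a second Poisson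
summation bounds the shifted Gaussian sums uniformly in the shift. Sums of this kind are Mathlib's
`HurwitzZeta.evenKernel` and `HurwitzZeta.cosKernel`, and Poisson summation is their functional
equation.
-/

open HurwitzZeta

section GaussianSums

variable {t : ℝ}

lemma evenKernel_pos (a : UnitAddCircle) (ht : 0 < t) : 0 < evenKernel a t := by
  induction a using QuotientAddGroup.induction_on with | H a =>
  have hsum := hasSum_int_evenKernel a ht
  exact hsum.tsum_eq ▸ hsum.summable.tsum_pos (fun _ ↦ (exp_pos _).le) 0 (exp_pos _)

lemma antitoneOn_evenKernel (a : UnitAddCircle) : AntitoneOn (evenKernel a) (Set.Ioi 0) := by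
  induction a using QuotientAddGroup.induction_on with | H a =>
  intro s hs t ht hst
  refine hasSum_le (fun n ↦ ?_) (hasSum_int_evenKernel a ht) (hasSum_int_evenKernel a hs)
  gcongr rexp ?_
  exact mul_le_mul_of_nonpos_left hst (by nlinarith [pi_pos, sq_nonneg (n + a)])

lemma cosKernel_eq_inv_sqrt_mul_evenKernel (a : UnitAddCircle) (ht : 0 < t) :
    cosKernel a t = (√t)⁻¹ * evenKernel a t⁻¹ := by
  have hsqrt : √t ≠ 0 := (sqrt_pos.mpr ht).ne'
  rw [evenKernel_functional_equation, ← sqrt_eq_rpow, sqrt_inv]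
  field_simp

lemma norm_exp_two_pi_mul_I (a : ℝ) (n : ℤ) : ‖Complex.exp (2 * π * Complex.I * a * n)‖ = 1 := by
  rw [← Complex.norm_exp_ofReal_mul_I (2 * π * a * n)]
  push_cast
  ring_nf

lemma norm_exp_mul_gaussian (a x : ℝ) (n : ℤ) :
    ‖Complex.exp (2 * π * Complex.I * a * n) * (rexp x : ℂ)‖ = rexp x := by
  rw [norm_mul, norm_exp_two_pi_mul_I, one_mul, Complex.norm_real, norm_of_nonneg (exp_pos _).le]

lemma cosKernel_le_evenKernel_zero (a : UnitAddCircle) (ht : 0 < t) :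
    cosKernel a t ≤ evenKernel 0 t := by
  induction a using QuotientAddGroup.induction_on with | H a =>
  have hsum := hasSum_int_evenKernel 0 ht
  simp only [add_zero] at hsum
  calc cosKernel a t ≤ ‖(cosKernel a t : ℂ)‖ := by
        rw [Complex.norm_real]; exact le_norm_self _
    _ ≤ evenKernel 0 t := (hasSum_int_cosKernel a ht).tsum_eq ▸
        tsum_of_norm_bounded hsum fun n ↦ (norm_exp_mul_gaussian a _ n).le

lemma evenKernel_le_inv_sqrt_mul (a : UnitAddCircle) (ht : 0 < t) :
    evenKernel a t ≤ (√t)⁻¹ * evenKernel 0 t⁻¹ := by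
  have hcos := cosKernel_le_evenKernel_zero a (inv_pos.mpr ht)
  rw [evenKernel_functional_equation, ← sqrt_eq_rpow, one_div, one_div]
  gcongr

lemma sq_half_add_sq_eighth_le_sq_add {β : ℝ} (hβ : |β| ≤ 1 / 2) (n : ℤ) :
    β ^ 2 / 2 + (n : ℝ) ^ 2 / 8 ≤ (n + β) ^ 2 := by
  rcases eq_or_ne n 0 with rfl | hn
  · norm_num
    nlinarith [sq_nonneg β]
  · have hn : (1 : ℝ) ≤ |(n : ℝ)| := mod_cast Int.one_le_abs hn
    have htri : |(n : ℝ)| - |β| ≤ |n + β| := by simpa using abs_sub_abs_le_abs_sub (n : ℝ) (-β)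
    have hβ_le : β ^ 2 ≤ (n + β) ^ 2 := sq_le_sq.mpr (by linarith)
    have hn_le : (n / 2 : ℝ) ^ 2 ≤ (n + β) ^ 2 := by
      rw [sq_le_sq, abs_div, abs_two]
      linarith
    linarith

lemma evenKernel_le_exp_mul {β : ℝ} (hβ : |β| ≤ 1 / 2) (ht : 0 < t) :
    evenKernel β t ≤ rexp (-π * β ^ 2 * t / 2) * evenKernel 0 (t / 8) := by
  have hsum := (hasSum_int_evenKernel 0 (by positivity : 0 < t / 8)).mul_left
    (rexp (-π * β ^ 2 * t / 2))
  refine hasSum_le (fun n ↦ ?_) (hasSum_int_evenKernel β ht) hsum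
  rw [← exp_add]
  gcongr
  have := mul_le_mul_of_nonneg_left (sq_half_add_sq_eighth_le_sq_add hβ n)
    (by positivity : 0 ≤ π * t)
  linarith

end GaussianSums

section Truncation

variable {t L : ℝ}

lemma gaussian_le_of_lt_abs (ht : 0 ≤ t) (hL : 0 ≤ L) {x : ℝ} (hx : L < |x|) :
    rexp (-π * x ^ 2 * t) ≤ rexp (-π * L ^ 2 * t) *
      (rexp (-π * (x + L) ^ 2 * t) + rexp (-π * (x + -L) ^ 2 * t)) := by
  have shift {y : ℝ} (h : L ^ 2 + y ^ 2 ≤ x ^ 2) :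
      rexp (-π * x ^ 2 * t) ≤ rexp (-π * L ^ 2 * t) * rexp (-π * y ^ 2 * t) := by
    rw [← exp_add]
    gcongr
    have := mul_le_mul_of_nonneg_left h (by positivity : 0 ≤ π * t)
    linarith
  rcases lt_abs.mp hx with hx | hx
  · refine (shift (y := x + -L) (by nlinarith)).trans ?_
    gcongr
    exact le_add_of_nonneg_left (exp_pos _).le
  · refine (shift (y := x + L) (by nlinarith)).trans ?_
    gcongr
    exact le_add_of_nonneg_right (exp_pos _).le

lemma norm_tsum_gaussian_tail_le (a : ℝ) (ht : 0 < t) (hL : 0 ≤ L) :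
    ‖∑' n : ℤ, if |(n : ℝ)| ≤ L then (0 : ℂ) else
        Complex.exp (2 * π * Complex.I * a * n) * rexp (-π * n ^ 2 * t)‖ ≤
      (√t)⁻¹ * (2 * rexp (-π * L ^ 2 * t) * evenKernel 0 t⁻¹) := by
  have hsum := ((hasSum_int_evenKernel L ht).add (hasSum_int_evenKernel (-L) ht)).mul_left
    (rexp (-π * L ^ 2 * t))
  calc _ ≤ rexp (-π * L ^ 2 * t) * (evenKernel L t + evenKernel (-L : ℝ) t) := by
        refine tsum_of_norm_bounded hsum fun n ↦ ?_
        split_ifs with hn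
        · rw [norm_zero]; positivity
        · rw [norm_exp_mul_gaussian]
          exact gaussian_le_of_lt_abs ht.le hL (not_le.mp hn)
    _ ≤ rexp (-π * L ^ 2 * t) *
          ((√t)⁻¹ * evenKernel 0 t⁻¹ + (√t)⁻¹ * evenKernel 0 t⁻¹) := by
        gcongr <;> exact evenKernel_le_inv_sqrt_mul _ ht
    _ = _ := by ring

lemma norm_tsum_truncated_gaussian_le (a : ℝ) (ht : 0 < t) (hL : 0 ≤ L) :
    ‖∑' n : ℤ, if |(n : ℝ)| ≤ L then
        Complex.exp (2 * π * Complex.I * a * n) * rexp (-π * n ^ 2 * t) else (0 : ℂ)‖ ≤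
      (√t)⁻¹ * (evenKernel a t⁻¹ + 2 * rexp (-π * L ^ 2 * t) * evenKernel 0 t⁻¹) := by
  set f : ℤ → ℂ := fun n ↦ Complex.exp (2 * π * Complex.I * a * n) * rexp (-π * n ^ 2 * t)
  have hf : HasSum f (cosKernel a t) := hasSum_int_cosKernel a ht
  have htail : Summable fun n : ℤ ↦ if |(n : ℝ)| ≤ L then 0 else f n :=
    (hf.summable.indicator {n : ℤ | ¬ |(n : ℝ)| ≤ L}).congr fun n ↦ by
      simp only [Set.indicator_apply, Set.mem_ofPred_eq, ite_not]
  have hfull : ‖(cosKernel a t : ℂ)‖ = (√t)⁻¹ * evenKernel a t⁻¹ := by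
    have := (evenKernel_pos a (inv_pos.mpr ht)).le
    rw [Complex.norm_real, cosKernel_eq_inv_sqrt_mul_evenKernel _ ht,
      norm_of_nonneg (by positivity)]
  calc _ = ‖cosKernel a t - ∑' n : ℤ, if |(n : ℝ)| ≤ L then 0 else f n‖ := by
        rw [← hf.tsum_eq, ← hf.summable.tsum_sub htail]
        congr! 3 with n
        split_ifs <;> simp [f]
    _ ≤ _ := (norm_sub_le _ _).trans
        (add_le_add hfull.le (norm_tsum_gaussian_tail_le a ht hL))
    _ = _ := by ring

end Truncation

section Window

variable {N : ℕ} {r L : ℝ}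

lemma Gwin_eq_of_abs_le (hL : L < N / 2) {l : ℤ} (hl : |(l : ℝ)| ≤ L) :
    Gwin N r L l = (r * √(2 * π))⁻¹ * rexp (-(l : ℝ) ^ 2 / (2 * r ^ 2)) := by
  rw [Gwin, tsum_eq_single 0, if_pos (by simpa using hl)]
  · simp
  · intro k hk
    refine if_neg fun h ↦ ?_
    have hk : (1 : ℝ) ≤ |(k : ℝ)| := mod_cast Int.one_le_abs hk
    have htri : |(k : ℝ) * N| ≤ |(l : ℝ) + k * N| + |(l : ℝ)| := by
      simpa using abs_sub ((l : ℝ) + k * N) l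
    rw [abs_mul, Nat.abs_cast] at htri
    nlinarith [abs_nonneg (l : ℝ)]

lemma norm_tsum_Gwin_mul_exp_le (hr : 0 < r) (hL : 0 ≤ L) (hLN : L < N / 2) (w : ℤ) :
    ‖∑' l : ℤ, (if |(l : ℝ)| ≤ L then
        ((Gwin N r L l : ℝ) : ℂ)
          * Complex.exp (2 * (π : ℂ) * Complex.I * (w : ℂ) * (l : ℂ) / (N : ℂ))
      else 0)‖ ≤
      evenKernel (w / N : ℝ) (2 * π * r ^ 2) +
        2 * rexp (-(L ^ 2 / (2 * r ^ 2))) * evenKernel 0 (2 * π * r ^ 2) := by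
  set t := (2 * π * r ^ 2)⁻¹ with ht
  have ht0 : 0 < t := by positivity
  have hsqrt : √t = (r * √(2 * π))⁻¹ := by
    rw [ht, sqrt_inv, sqrt_mul (by positivity), sqrt_sq hr.le, mul_comm]
  have hexp (x : ℝ) : -x ^ 2 / (2 * r ^ 2) = -π * x ^ 2 * t := by
    rw [ht]; field_simp
  have hterm (l : ℤ) : (if |(l : ℝ)| ≤ L then
        ((Gwin N r L l : ℝ) : ℂ)
          * Complex.exp (2 * (π : ℂ) * Complex.I * (w : ℂ) * (l : ℂ) / (N : ℂ))
      else 0) = (√t : ℂ) * if |(l : ℝ)| ≤ L then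
        Complex.exp (2 * π * Complex.I * (w / N : ℝ) * l) * rexp (-π * l ^ 2 * t) else 0 := by
    split_ifs with hl
    · rw [Gwin_eq_of_abs_le hLN hl, hsqrt, hexp]
      push_cast
      ring_nf
    · rw [mul_zero]
  rw [tsum_congr hterm, tsum_mul_left, norm_mul, Complex.norm_real,
    norm_of_nonneg (sqrt_nonneg t), ← le_inv_mul_iff₀ (sqrt_pos.mpr ht0), ← neg_div, hexp,
    ← inv_inv (2 * π * r ^ 2), ← ht]
  exact norm_tsum_truncated_gaussian_le _ ht0 hL

end Window

section BalancedResidue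

variable {N : ℕ}

lemma bres_div_eq (hN : 0 < N) (w : ℤ) :
    (bres N w / N : ℝ) = w / N - ⌈(w / N : ℝ) - 1 / 2⌉ := by
  have hceil : ⌈(w : ℚ) / N - 1 / 2⌉ = ⌈(w / N : ℝ) - 1 / 2⌉ := by
    rw [← Rat.ceil_cast (α := ℝ)]
    push_cast
    rfl
  rw [bres, hceil]
  push_cast
  field_simp

lemma abs_bres_div_le (hN : 0 < N) (w : ℤ) : |(bres N w / N : ℝ)| ≤ 1 / 2 := by
  rw [bres_div_eq hN, abs_le]
  have hle := Int.le_ceil ((w / N : ℝ) - 1 / 2)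
  have hlt := Int.ceil_lt_add_one ((w / N : ℝ) - 1 / 2)
  constructor <;> linarith

lemma coe_bres_div (hN : 0 < N) (w : ℤ) :
    ((bres N w / N : ℝ) : UnitAddCircle) = (w / N : ℝ) := by
  rw [bres_div_eq hN, AddCircle.coe_sub, sub_eq_self, AddCircle.coe_eq_zero_iff]
  exact ⟨_, zsmul_one _⟩

lemma evenKernel_div_le_exp_bres (hN : 0 < N) {r : ℝ} (hr : 0 < r) (w : ℤ) :
    evenKernel (w / N : ℝ) (2 * π * r ^ 2) ≤
      rexp (-(π * (r * |(bres N w / N : ℝ)|)) ^ 2) * evenKernel 0 (π * r ^ 2 / 4) := by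
  rw [← coe_bres_div hN]
  convert evenKernel_le_exp_mul (abs_bres_div_le hN w) (by positivity : 0 < 2 * π * r ^ 2) using 3
  · rw [mul_pow, mul_pow, sq_abs]; ring
  · ring

lemma one_lt_mul_abs_bres_div (hN : 0 < N) {B : ℝ} (hB : 0 < B) {w : ℤ}
    (hw : N / B < |(bres N w : ℝ)|) : 1 < B * |(bres N w / N : ℝ)| := by
  rw [abs_div, Nat.abs_cast, mul_div_assoc', one_lt_div (by positivity)]
  exact (div_lt_iff₀' hB).mp hw

end BalancedResidue

lemma exp_neg_le_of_log_one_div_le {ε x : ℝ} (hε : 0 < ε) (h : log (1 / ε) ≤ x) :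
    rexp (-x) ≤ ε := by
  rw [← le_log_iff_exp_le hε]
  rw [one_div, log_inv] at h
  linarith

lemma exp_neg_sq_div_le {ε r L : ℝ} (hε : 0 < ε) (hr : 0 < r)
    (hL : r * √(2 * log (1 / ε)) ≤ L) : rexp (-(L ^ 2 / (2 * r ^ 2))) ≤ ε := by
  refine exp_neg_le_of_log_one_div_le hε ?_
  have hLr : 2 * log (1 / ε) ≤ (L / r) ^ 2 := (sqrt_le_iff.mp ((le_div_iff₀' hr).mpr hL)).2
  rw [div_pow, le_div_iff₀ (by positivity)] at hLr
  rw [le_div_iff₀ (by positivity)]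
  linarith

lemma half_le_sqrt_log_one_div {ε : ℝ} (hε : 0 < ε) (hε_half : ε < 1 / 2) :
    1 / 2 ≤ √(log (1 / ε)) := by
  have hlog : log 2 ≤ log (1 / ε) :=
    log_le_log two_pos (by rw [le_div_iff₀ hε]; linarith)
  exact le_sqrt_of_sq_le (by linarith [log_two_gt_d9])

theorem window_kills_high_frequencies_general :
    ∃ C : ℝ, 0 < C ∧
      ∀ (ε B : ℝ) (N : ℕ) (r L : ℝ),
        0 < ε → ε < 1 / 2 → 0 < B →
        B * √(log (1 / ε)) ≤ r →
        r * √(2 * log (1 / ε)) ≤ L →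
        L < (N : ℝ) / 2 →
        ∀ w : ℤ, (N : ℝ) / B < |(bres N w : ℝ)| →
          ‖∑' l : ℤ, (if |(l : ℝ)| ≤ L then
                ((Gwin N r L l : ℝ) : ℂ)
                  * Complex.exp (2 * (π : ℂ) * Complex.I * (w : ℂ) * (l : ℂ) / (N : ℂ))
              else 0)‖ ≤ C * ε := by
  set K := evenKernel 0 (1 / 2)
  have hK : 0 < K := evenKernel_pos 0 one_half_pos
  refine ⟨3 * K, by positivity, fun ε B N r L hε hε_half hB hr hL hLN w hw ↦ ?_⟩
  have hsqrt := half_le_sqrt_log_one_div hε hε_half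
  have hr0 : 0 < r := (by positivity : 0 < B * √(log (1 / ε))).trans_le hr
  have hL0 : 0 ≤ L := (by positivity : 0 ≤ r * √(2 * log (1 / ε))).trans hL
  have hN : 0 < N := by
    have : (0 : ℝ) < N := by linarith
    exact_mod_cast this
  set β : ℝ := bres N w / N
  have hBβ : 1 < B * |β| := one_lt_mul_abs_bres_div hN hB hw
  have hr1 : 1 ≤ r := by
    have hB2 : 2 < B := by nlinarith [abs_bres_div_le hN w]
    nlinarith
  have hK_le {t : ℝ} (ht : 1 / 2 ≤ t) : evenKernel 0 t ≤ K :=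
    antitoneOn_evenKernel 0 (Set.mem_Ioi.mpr one_half_pos) (one_half_pos.trans_le ht) ht
  have hfreq : rexp (-(π * (r * |β|)) ^ 2) ≤ ε := by
    refine exp_neg_le_of_log_one_div_le hε (sqrt_le_iff.mp ?_).2
    have hrβ : √(log (1 / ε)) ≤ r * |β| := by nlinarith [abs_nonneg β]
    nlinarith [pi_gt_three]
  have hr2 : 3 ≤ π * r ^ 2 := by nlinarith [pi_gt_three]
  calc _ ≤ _ := norm_tsum_Gwin_mul_exp_le hr0 hL0 hLN w
    _ ≤ ε * K + 2 * ε * K := by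
      gcongr
      · exact (evenKernel_div_le_exp_bres hN hr0 w).trans
          (mul_le_mul hfreq (hK_le (by linarith)) (evenKernel_pos 0 (by positivity)).le hε.le)
      · exact (evenKernel_pos 0 (by positivity)).le
      · exact exp_neg_sq_div_le hε hr0 hL
      · exact hK_le (by linarith)
    _ = 3 * K * ε := by ring

/-- the truncated periodized Gaussian window kills frequencies whose
balanced residue mod `N` is larger than `N/B` in absolute value. -/
theorem window_kills_high_frequencies :
    ∃ c C : ℝ, 0 < c ∧ 0 < C ∧
      ∀ (ε B : ℝ) (N : ℕ) (r L : ℝ),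
        0 < ε → ε < 1 / 2 → 1 < B → 0 < N →
        r = c * B * Real.sqrt (Real.log (1 / ε)) →
        L = r * Real.sqrt (2 * Real.log (1 / ε)) →
        B < r → r < L → L < (N : ℝ) / 2 →
        ∀ w : ℤ, (N : ℝ) / B < |(bres N w : ℝ)| →
          ‖∑' l : ℤ, (if |(l : ℝ)| ≤ L then
                ((Gwin N r L l : ℝ) : ℂ)
                  * Complex.exp (2 * (Real.pi : ℂ) * Complex.I * (w : ℂ) * (l : ℂ) / (N : ℂ))
              else 0)‖ ≤ C * ε := by
  obtain ⟨C, hC, h⟩ := window_kills_high_frequencies_general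
  exact ⟨1, C, one_pos, hC, fun ε B N r L hε hε_half hB _ hr hL _ _ hLN ↦
    h ε B N r L hε hε_half (one_pos.trans hB) (by rw [hr, one_mul]) hL.ge hLN⟩
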